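/- arXiv:math/9810196 — 3 statements merged into one kernel-verified Lean document; each statement's English description precedes it below -/
import Mathlib

section
/- Let r > 0 and let f be holomorphic on the disc D(0,r) with f(0) = 0, f'(0) = 0, f''(0) = 2α ≠ 0 (i.e. f(z) = αz²(1 + o(z)) with α ≠ 0), and f'(z) ≠ 0 for 0 < |z| < r. Then the Schwarzian derivative S_f, which is holomorphic on the punctured disc, has a Laurent expansion at 0 of the form S_f(z) = −3/(2z²) + b/z + a₀ + a₁z + ⋯, i.e. z ↦ S_f(z) + 3/(2z²) − b/z extends holomorphically to 0 with value a₀ for suitable b, a₀ ∈ ℂ, and moreover the coefficients satisfy b² + 2a₀ = 0. -/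
/-!
Since `f'(0) = 0`, the derivative factors as `f' = z g` with `g` holomorphic, and `g(0) = f''(0) ≠ 0`
together with `f' ≠ 0` off the origin makes `g` zero-free on the disc. With `u = g'/g`,
which is holomorphic, `f''/f' = 1/z + u`, hence
`S_f = (f''/f')' - (f''/f')²/2 = -3/(2z²) - u/z + u' - u²/2`.
Writing `u = u(0) + z v` gives `b = -u(0)` and `h = u' - v - u²/2`; as `v(0) = u'(0)`, the value
`h(0)` is `-u(0)²/2`, which is the relation `b² + 2 h(0) = 0`.
-/

open Complex Metric

/-- The Schwarzian derivative `S_f = f'''/f' - (3/2) (f''/f')²`. -/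
noncomputable def schwarzian (f : ℂ → ℂ) (z : ℂ) : ℂ :=
  iteratedDeriv 3 f z / deriv f z - (3 / 2) * (iteratedDeriv 2 f z / deriv f z) ^ 2

/-- If `f` is holomorphic on the disc `D(0,r)` with a branch point of order two at the
origin (`f z = α z² (1 + o(z))`, `α ≠ 0`) and `f' ≠ 0` on the punctured disc, then its
Schwarzian derivative has a Laurent expansion
`S_f(z) = -3/(2 z²) + b/z + a₀ + a₁ z + ⋯` at `0`, i.e. `S_f(z) + 3/(2z²) - b/z` extends
holomorphically to the full disc, and the coefficients satisfy `b² + 2 a₀ = 0`. -/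
theorem schwarzian_branch_point_laurent (r : ℝ) (hr : 0 < r) (α : ℂ) (hα : α ≠ 0)
    (f : ℂ → ℂ) (hf : DifferentiableOn ℂ f (ball (0 : ℂ) r))
    (hf0 : f 0 = 0) (hf'0 : deriv f 0 = 0) (hf''0 : iteratedDeriv 2 f 0 = 2 * α)
    (hf' : ∀ z ∈ ball (0 : ℂ) r, z ≠ 0 → deriv f z ≠ 0) :
    ∃ b : ℂ, ∃ h : ℂ → ℂ, DifferentiableOn ℂ h (ball (0 : ℂ) r) ∧
      (∀ z ∈ ball (0 : ℂ) r, z ≠ 0 →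
        schwarzian f z = -3 / (2 * z ^ 2) + b / z + h z) ∧
      b ^ 2 + 2 * h 0 = 0 := by
  have hnhds : ball (0 : ℂ) r ∈ nhds (0 : ℂ) := ball_mem_nhds 0 hr
  set g : ℂ → ℂ := dslope (deriv f) 0 with hg_def
  have hfg : deriv f = fun z => z * g z := by
    funext z
    have h := sub_smul_dslope (deriv f) 0 z
    simpa [hf'0] using h.symm
  have hg : DifferentiableOn ℂ g (ball 0 r) :=
    (Complex.differentiableOn_dslope hnhds).2 (hf.deriv isOpen_ball)
  have hg1 : DifferentiableOn ℂ (deriv g) (ball 0 r) := hg.deriv isOpen_ball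
  have hgne : ∀ z ∈ ball (0 : ℂ) r, g z ≠ 0 := by
    intro z hz
    by_cases h : z = 0
    · rw [iteratedDeriv_succ, iteratedDeriv_one] at hf''0
      rw [h, hg_def, dslope_same, hf''0]
      simpa using hα
    · have h1 := hf' z hz h
      rw [hfg] at h1
      exact right_ne_zero_of_mul h1
  have gat : ∀ z ∈ ball (0 : ℂ) r, HasDerivAt g (deriv g z) z := fun z hz =>
    (hg.differentiableAt (isOpen_ball.mem_nhds hz)).hasDerivAt
  have g1at : ∀ z ∈ ball (0 : ℂ) r, HasDerivAt (deriv g) (deriv (deriv g) z) z := fun z hz =>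
    (hg1.differentiableAt (isOpen_ball.mem_nhds hz)).hasDerivAt
  have hf2 : ∀ z ∈ ball (0 : ℂ) r, iteratedDeriv 2 f z = g z + z * deriv g z := by
    intro z hz
    rw [iteratedDeriv_succ, iteratedDeriv_one, hfg]
    have hd : HasDerivAt (fun w => w * g w) (1 * g z + z * deriv g z) z :=
      (hasDerivAt_id z).mul (gat z hz)
    rw [hd.deriv, one_mul]
  have hf3 : ∀ z ∈ ball (0 : ℂ) r,
      iteratedDeriv 3 f z = 2 * deriv g z + z * deriv (deriv g) z := by
    intro z hz
    have hev : iteratedDeriv 2 f =ᶠ[nhds z] fun w => g w + w * deriv g w :=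
      Filter.eventuallyEq_of_mem (isOpen_ball.mem_nhds hz) hf2
    have hd : HasDerivAt (fun w => g w + w * deriv g w)
        (deriv g z + (1 * deriv g z + z * deriv (deriv g) z)) z :=
      (gat z hz).add ((hasDerivAt_id z).mul (g1at z hz))
    rw [iteratedDeriv_succ, hev.deriv_eq, hd.deriv]
    ring
  set u : ℂ → ℂ := fun z => deriv g z / g z with hu_def
  have hu : DifferentiableOn ℂ u (ball 0 r) := hg1.div hg hgne
  have hu' : ∀ z ∈ ball (0 : ℂ) r,
      deriv u z = (deriv (deriv g) z * g z - deriv g z * deriv g z) / g z ^ 2 :=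
    fun z hz => ((g1at z hz).div (gat z hz) (hgne z hz)).deriv
  refine ⟨-u 0, fun z => deriv u z - dslope u 0 z - u z ^ 2 / 2, ?_, ?_, ?_⟩
  · exact ((hu.deriv isOpen_ball).sub ((Complex.differentiableOn_dslope hnhds).2 hu)).sub
      ((hu.pow 2).div_const 2)
  · intro z hz hz0
    have hgz := hgne z hz
    have hv : dslope u 0 z = (u z - u 0) / z := by
      rw [eq_div_iff hz0, mul_comm]
      simpa using sub_smul_dslope u 0 z
    have hfz : deriv f z = z * g z := congrFun hfg z
    have huz : u z = deriv g z / g z := rfl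
    simp only [schwarzian]
    rw [hf3 z hz, hf2 z hz, hfz, hv, hu' z hz, huz]
    field_simp
    ring
  · simp only [dslope_same]
    ring
end

section
/- Let r > 0, b ∈ ℂ, and let h be holomorphic on the disc D(0,r) with b² + 2h(0) = 0. Define q(z) = −3/(2z²) + b/z + h(z) on the punctured disc. Then there exist 0 < r' ≤ r and a holomorphic function f on D(0,r') with f(0) = 0, f'(0) = 0, f''(0) ≠ 0, and f'(z) ≠ 0 for 0 < |z| < r', such that S_f(z) = q(z) for all 0 < |z| < r'. That is, every 'admissible' Schwarzian with leading term −3/(2z²), a possible simple pole term b/z, and constant term a₀ = h(0) satisfying b² + 2a₀ = 0 is the Schwarzian of a function with a single branch point of order two at the origin. -/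
/-!
Writing `f' = z E` with `E 0 ≠ 0` and `E'/E = -b + z v`, a computation shows that
`S_f = -3/(2z²) + b/z + h` is equivalent to the equation
`z v' = (h + b²/2) - b z v + z² v²/2`.
Because of the condition `b² + 2 h(0) = 0` the term `h + b²/2` vanishes at the origin, so it equals
`z k` with `k` holomorphic, and the equation becomes the *regular* Riccati equation
`v' = k - b v + z v²/2`. It is linearised by `v = p / s`, where
`p' = k s - b p`, `s' = -(z/2) p`, with `p 0 = 0`, `s 0 = 1`; moreover `E = exp (-b z) / s²`.

The linear system is solved holomorphically by Picard iteration on a small disc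
(`exists_holomorphic_ode_solution`), `exists_riccati` extracts `v` and `E`, and `f` is then a
primitive of `z E`.
-/

open Complex Metric

open Filter Topology

/-- Local holomorphic Picard theorem: if `F z` is Lipschitz, uniformly for `z` in a disc, and
`F` maps holomorphic curves to holomorphic curves, then `Y' = F z Y`, `Y 0 = y₀` has a solution on
the disc as soon as its radius is small compared with the Lipschitz constant. -/
lemma exists_holomorphic_ode_solution {V : Type*} [NormedAddCommGroup V] [NormedSpace ℂ V]
    [CompleteSpace V] {ρ K M : ℝ} (hρ : 0 < ρ) (hK : 0 ≤ K) (hKρ : K * ρ ≤ 1 / 2)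
    (F : ℂ → V → V) (y₀ : V)
    (hF : ∀ Y : ℂ → V, DifferentiableOn ℂ Y (ball 0 ρ) →
      DifferentiableOn ℂ (fun z => F z (Y z)) (ball 0 ρ))
    (hlip : ∀ z ∈ ball (0 : ℂ) ρ, ∀ x y, ‖F z x - F z y‖ ≤ K * ‖x - y‖)
    (hM : ∀ z ∈ ball (0 : ℂ) ρ, ‖F z y₀‖ ≤ M) :
    ∃ Y : ℂ → V, Y 0 = y₀ ∧ ∀ z ∈ ball (0 : ℂ) ρ, HasDerivAt Y (F z (Y z)) z := by
  have h0 : (0 : ℂ) ∈ ball (0 : ℂ) ρ := mem_ball_self hρ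
  have hstep : ∀ Y : ℂ → V, DifferentiableOn ℂ Y (ball 0 ρ) →
      ∃ Z : ℂ → V, Z 0 = y₀ ∧ ∀ z ∈ ball (0 : ℂ) ρ, HasDerivAt Z (F z (Y z)) z :=
    fun Y hY => (hF Y hY).isExactOn_ball.with_val_at 0 y₀
  choose! T hT0 hT using hstep
  let Y : ℕ → ℂ → V := fun n => T^[n] (fun _ => y₀)
  have hYs : ∀ n, Y (n + 1) = T (Y n) := fun n => Function.iterate_succ_apply' T n _
  have hYd : ∀ n, DifferentiableOn ℂ (Y n) (ball 0 ρ) := by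
    intro n
    induction n with
    | zero => exact differentiableOn_const _
    | succ n ih =>
      rw [hYs]
      exact fun z hz => (hT _ ih z hz).differentiableAt.differentiableWithinAt
  have hYder : ∀ n, ∀ z ∈ ball (0 : ℂ) ρ, HasDerivAt (Y (n + 1)) (F z (Y n z)) z := by
    intro n z hz
    rw [hYs]
    exact hT _ (hYd n) z hz
  have hY0 : ∀ n, Y n 0 = y₀ := by
    intro n
    cases n with
    | zero => rfl
    | succ n => rw [hYs]; exact hT0 _ (hYd n)
  have hM0 : 0 ≤ M := (norm_nonneg _).trans (hM 0 h0)
  -- Successive iterates differ by at most a geometric sequence of ratio `K ρ ≤ 1/2`.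
  have hgeom : ∀ n, ∀ z ∈ ball (0 : ℂ) ρ, ‖Y (n + 1) z - Y n z‖ ≤ M * ρ * (1 / 2) ^ n := by
    intro n
    induction n with
    | zero =>
      intro z hz
      have hmv := (convex_ball (0 : ℂ) ρ).norm_image_sub_le_of_norm_hasDerivWithin_le
        (fun x hx => (hYder 0 x hx).hasDerivWithinAt) (fun x hx => hM x hx) h0 hz
      rw [hY0, sub_zero] at hmv
      have hz' : ‖z‖ ≤ ρ := (mem_ball_zero_iff.1 hz).le
      calc ‖Y (0 + 1) z - Y 0 z‖ ≤ M * ‖z‖ := hmv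
        _ ≤ M * ρ * (1 / 2) ^ 0 := by rw [pow_zero, mul_one]; gcongr
    | succ n ih =>
      intro z hz
      have hmv := (convex_ball (0 : ℂ) ρ).norm_image_sub_le_of_norm_hasDerivWithin_le
        (fun x hx => ((hYder (n + 1) x hx).sub (hYder n x hx)).hasDerivWithinAt)
        (fun x hx => (hlip x hx _ _).trans (mul_le_mul_of_nonneg_left (ih x hx) hK)) h0 hz
      simp only [Pi.sub_apply, hY0, sub_self, sub_zero] at hmv
      have hz' : ‖z‖ ≤ ρ := (mem_ball_zero_iff.1 hz).le
      have hc : 0 ≤ M * ρ * (1 / 2) ^ n := by positivity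
      calc ‖Y (n + 1 + 1) z - Y (n + 1) z‖ ≤ K * (M * ρ * (1 / 2) ^ n) * ‖z‖ := hmv
        _ ≤ K * (M * ρ * (1 / 2) ^ n) * ρ := by gcongr
        _ = (K * ρ) * (M * ρ * (1 / 2) ^ n) := by ring
        _ ≤ (1 / 2) * (M * ρ * (1 / 2) ^ n) := by gcongr
        _ = M * ρ * (1 / 2) ^ (n + 1) := by ring
  have hdist : ∀ z ∈ ball (0 : ℂ) ρ, ∀ n, dist (Y n z) (Y (n + 1) z) ≤ M * ρ * (1 / 2) ^ n := by
    intro z hz n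
    rw [dist_comm, dist_eq_norm]
    exact hgeom n z hz
  have hlim : ∀ z, ∃ y, z ∈ ball (0 : ℂ) ρ → Tendsto (fun n => Y n z) atTop (𝓝 y) := by
    intro z
    by_cases hz : z ∈ ball (0 : ℂ) ρ
    · obtain ⟨y, hy⟩ := cauchySeq_tendsto_of_complete
        (cauchySeq_of_le_geometric (1 / 2) (M * ρ) (by norm_num) (hdist z hz))
      exact ⟨y, fun _ => hy⟩
    · exact ⟨0, fun h => absurd h hz⟩
  choose L hL using hlim
  have hunif : TendstoUniformlyOn Y L atTop (ball 0 ρ) := by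
    rw [Metric.tendstoUniformlyOn_iff]
    intro ε hε
    have ht : Tendsto (fun n : ℕ => M * ρ * (1 / 2 : ℝ) ^ n / (1 - 1 / 2)) atTop (𝓝 0) := by
      have := ((tendsto_pow_atTop_nhds_zero_of_lt_one (r := (1 / 2 : ℝ)) (by norm_num)
        (by norm_num)).const_mul (M * ρ)).div_const (1 - 1 / 2)
      simpa using this
    filter_upwards [ht.eventually_lt_const hε] with n hn z hz
    rw [dist_comm]
    exact (dist_le_of_le_geometric_of_tendsto (1 / 2) (M * ρ) (by norm_num) (hdist z hz)
      (hL z hz) n).trans_lt hn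
  have hloc := hunif.tendstoLocallyUniformlyOn
  have hLd := hloc.differentiableOn (Eventually.of_forall hYd) isOpen_ball
  have hder := hloc.deriv (Eventually.of_forall hYd) isOpen_ball
  refine ⟨L, tendsto_nhds_unique (hL 0 h0) (by simp [hY0]), fun z hz => ?_⟩
  have h1 : Tendsto (fun n => deriv (Y (n + 1)) z) atTop (𝓝 (deriv L z)) :=
    (hder.tendsto_at hz).comp (tendsto_add_atTop_nat 1)
  have h2 : Tendsto (fun n => deriv (Y (n + 1)) z) atTop (𝓝 (F z (L z))) := by
    have hcont : Continuous (F z) :=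
      (LipschitzWith.of_dist_le_mul (K := ⟨K, hK⟩) fun x y => by
        rw [dist_eq_norm, dist_eq_norm]; exact hlip z hz x y).continuous
    have := (hcont.tendsto (L z)).comp (hL z hz)
    exact this.congr fun n => (hYder n z hz).deriv.symm
  rw [← tendsto_nhds_unique h1 h2]
  exact (hLd.differentiableAt (isOpen_ball.mem_nhds hz)).hasDerivAt

/-- A local holomorphic solution `v` of the Riccati equation `v' = k - b v + z v²/2`, together with
a nonvanishing function `E` with logarithmic derivative `-b + z v`. -/
lemma exists_riccati {r : ℝ} (hr : 0 < r) (b : ℂ) (k : ℂ → ℂ)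
    (hk : DifferentiableOn ℂ k (ball 0 r)) :
    ∃ ρ, 0 < ρ ∧ ρ ≤ r ∧ ∃ v E : ℂ → ℂ, ∀ z ∈ ball (0 : ℂ) ρ, E z ≠ 0 ∧
      HasDerivAt v (k z - b * v z + z * v z ^ 2 / 2) z ∧
      HasDerivAt E (E z * (-b + z * v z)) z := by
  have hkc : ContinuousAt k 0 := (hk.differentiableAt (ball_mem_nhds 0 hr)).continuousAt
  obtain ⟨δ, hδ, hkδ⟩ := Metric.eventually_nhds_iff_ball.1
    (hkc.norm.eventually_lt continuousAt_const (lt_add_one ‖k 0‖))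
  -- A common bound for the Lipschitz constant of the system and for `‖k‖`.
  set K : ℝ := ‖k 0‖ + 1 + ‖b‖ + 1 with hKdef
  have hK : 0 < K := by positivity
  set ρ : ℝ := min (min r δ) (min 1 (1 / (2 * K))) with hρdef
  have hρ : 0 < ρ := by positivity
  have hρr : ρ ≤ r := (min_le_left _ _).trans (min_le_left _ _)
  have hρδ : ρ ≤ δ := (min_le_left _ _).trans (min_le_right _ _)
  have hρ1 : ρ ≤ 1 := (min_le_right _ _).trans (min_le_left _ _)
  have hρK : ρ ≤ 1 / (2 * K) := (min_le_right _ _).trans (min_le_right _ _)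
  have hKρ : K * ρ ≤ 1 / 2 := by
    calc K * ρ ≤ K * (1 / (2 * K)) := by gcongr
      _ = 1 / 2 := by field_simp
  have hkb : ∀ z ∈ ball (0 : ℂ) ρ, ‖k z‖ ≤ ‖k 0‖ + 1 := fun z hz =>
    (hkδ z (ball_subset_ball hρδ hz)).le
  have hkd : DifferentiableOn ℂ k (ball 0 ρ) := hk.mono (ball_subset_ball hρr)
  obtain ⟨Y, hY0, hY⟩ := exists_holomorphic_ode_solution (V := ℂ × ℂ) (M := K) hρ hK.le hKρ
    (fun z y => (k z * y.2 - b * y.1, -(z / 2) * y.1)) (0, 1)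
    (by
      intro Y hY
      have h1 := hY.fst
      have h2 := hY.snd
      exact ((hkd.mul h2).sub (h1.const_mul b)).prodMk
        ((differentiableOn_id.div_const 2).neg.mul h1))
    (by
      intro z hz x y
      have hx1 : ‖x.1 - y.1‖ ≤ ‖x - y‖ := norm_fst_le (x - y)
      have hx2 : ‖x.2 - y.2‖ ≤ ‖x - y‖ := norm_snd_le (x - y)
      have hz1 : ‖z‖ ≤ 1 := (mem_ball_zero_iff.1 hz).le.trans hρ1
      have hkz := hkb z hz
      have hn := norm_nonneg (x - y)
      rw [Prod.norm_def]
      refine max_le ?_ ?_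
      · change ‖(k z * x.2 - b * x.1) - (k z * y.2 - b * y.1)‖ ≤ _
        calc ‖(k z * x.2 - b * x.1) - (k z * y.2 - b * y.1)‖
            = ‖k z * (x.2 - y.2) - b * (x.1 - y.1)‖ := by congr 1; ring
          _ ≤ ‖k z‖ * ‖x.2 - y.2‖ + ‖b‖ * ‖x.1 - y.1‖ := by
            rw [← norm_mul, ← norm_mul]; exact norm_sub_le _ _
          _ ≤ (‖k 0‖ + 1) * ‖x - y‖ + ‖b‖ * ‖x - y‖ := by gcongr
          _ ≤ K * ‖x - y‖ := by rw [hKdef]; linarith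
      · change ‖-(z / 2) * x.1 - -(z / 2) * y.1‖ ≤ _
        calc ‖-(z / 2) * x.1 - -(z / 2) * y.1‖
            = ‖z‖ / 2 * ‖x.1 - y.1‖ := by
              rw [← mul_sub, norm_mul, norm_neg, norm_div]; simp
          _ ≤ K * ‖x - y‖ := by
            gcongr
            have := norm_nonneg (k 0)
            have := norm_nonneg b
            linarith)
    (by
      intro z hz
      have := hkb z hz
      have := norm_nonneg b
      simp only [mul_one, mul_zero, sub_zero, Prod.norm_def, norm_zero]
      exact max_le (by linarith) hK.le)
  have hp : ∀ z ∈ ball (0 : ℂ) ρ,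
      HasDerivAt (fun z => (Y z).1) (k z * (Y z).2 - b * (Y z).1) z := fun z hz => (hY z hz).fst
  have hs : ∀ z ∈ ball (0 : ℂ) ρ,
      HasDerivAt (fun z => (Y z).2) (-(z / 2) * (Y z).1) z := fun z hz => (hY z hz).snd
  have hs0 : (Y 0).2 ≠ 0 := by rw [hY0]; exact one_ne_zero
  obtain ⟨η, hη, hsη⟩ := Metric.eventually_nhds_iff_ball.1
    ((hs 0 (mem_ball_self hρ)).continuousAt.eventually_ne hs0)
  refine ⟨min ρ η, lt_min hρ hη, (min_le_left _ _).trans hρr, fun z => (Y z).1 / (Y z).2,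
    fun z => exp (-b * z) / (Y z).2 ^ 2, fun z hz => ?_⟩
  have hzρ := ball_subset_ball (min_le_left _ _) hz
  have hsz : (Y z).2 ≠ 0 := hsη z (ball_subset_ball (min_le_right _ _) hz)
  refine ⟨div_ne_zero (exp_ne_zero _) (pow_ne_zero _ hsz), ?_, ?_⟩
  · convert! (hp z hzρ).div (hs z hzρ) hsz using 1
    field_simp
    ring
  · have he : HasDerivAt (fun z => exp (-b * z)) (exp (-b * z) * (-b)) z := by
      simpa using ((hasDerivAt_id z).const_mul (-b)).cexp
    convert! he.div ((hs z hzρ).pow 2) (pow_ne_zero _ hsz) using 1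
    simp only [Pi.pow_apply]
    field_simp
    ring

/-- Every admissible Schwarzian `q(z) = -3/(2z²) + b/z + h(z)`, with `h` holomorphic
and `b² + 2 h(0) = 0`, is locally the Schwarzian derivative of a holomorphic function
with a single branch point of order two at the origin. -/
theorem admissible_schwarzian_has_branched_solution (r : ℝ) (hr : 0 < r)
    (b : ℂ) (h : ℂ → ℂ) (hh : DifferentiableOn ℂ h (ball (0 : ℂ) r))
    (hcoeff : b ^ 2 + 2 * h 0 = 0) :
    ∃ r' : ℝ, 0 < r' ∧ r' ≤ r ∧
      ∃ f : ℂ → ℂ, DifferentiableOn ℂ f (ball (0 : ℂ) r') ∧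
        f 0 = 0 ∧ deriv f 0 = 0 ∧ iteratedDeriv 2 f 0 ≠ 0 ∧
        ∀ z ∈ ball (0 : ℂ) r', z ≠ 0 →
          deriv f z ≠ 0 ∧ schwarzian f z = -3 / (2 * z ^ 2) + b / z + h z := by
  -- `dslope h 0` is the holomorphic extension of `(h z - h 0) / z = (h z + b² / 2) / z`.
  have hk : DifferentiableOn ℂ (dslope h 0) (ball 0 r) :=
    (Complex.differentiableOn_dslope (ball_mem_nhds 0 hr)).2 hh
  obtain ⟨ρ, hρ, hρr, v, E, hvE⟩ := exists_riccati hr b _ hk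
  have h0 : (0 : ℂ) ∈ ball (0 : ℂ) ρ := mem_ball_self hρ
  have hG : ∀ z ∈ ball (0 : ℂ) ρ,
      HasDerivAt (fun z => z * E z) (E z * (1 - b * z + z ^ 2 * v z)) z := by
    intro z hz
    convert! (hasDerivAt_id z).mul (hvE z hz).2.2 using 1
    simp only [id]
    ring
  have hG1 : ∀ z ∈ ball (0 : ℂ) ρ,
      HasDerivAt (fun z => E z * (1 - b * z + z ^ 2 * v z))
        (E z * (-b + z * v z) * (1 - b * z + z ^ 2 * v z) +
          E z * (-b + (2 * z * v z +
            z ^ 2 * (dslope h 0 z - b * v z + z * v z ^ 2 / 2)))) z := by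
    intro z hz
    obtain ⟨-, hv, hE⟩ := hvE z hz
    convert! hE.mul ((((hasDerivAt_id z).const_mul b).const_sub 1).add
      (((hasDerivAt_id z).pow 2).mul hv)) using 1
    simp
  obtain ⟨f, hf0, hf⟩ := (DifferentiableOn.isExactOn_ball (f := fun z => z * E z)
    fun z hz => (hG z hz).differentiableAt.differentiableWithinAt).with_val_at 0 0
  have hd1 : ∀ z ∈ ball (0 : ℂ) ρ, deriv f z = z * E z := fun z hz => (hf z hz).deriv
  have hd2 : ∀ z ∈ ball (0 : ℂ) ρ,
      iteratedDeriv 2 f z = E z * (1 - b * z + z ^ 2 * v z) := by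
    intro z hz
    have hev : deriv f =ᶠ[𝓝 z] fun z => z * E z :=
      eventually_of_mem (isOpen_ball.mem_nhds hz) hd1
    rw [iteratedDeriv_succ, iteratedDeriv_one, hev.deriv_eq, (hG z hz).deriv]
  have hd3 : ∀ z ∈ ball (0 : ℂ) ρ, iteratedDeriv 3 f z =
      E z * (-b + z * v z) * (1 - b * z + z ^ 2 * v z) +
          E z * (-b + (2 * z * v z +
            z ^ 2 * (dslope h 0 z - b * v z + z * v z ^ 2 / 2))) := by
    intro z hz
    have hev : iteratedDeriv 2 f =ᶠ[𝓝 z] fun z => E z * (1 - b * z + z ^ 2 * v z) :=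
      eventually_of_mem (isOpen_ball.mem_nhds hz) hd2
    rw [iteratedDeriv_succ, hev.deriv_eq, (hG1 z hz).deriv]
  refine ⟨ρ, hρ, hρr, f, fun z hz => (hf z hz).differentiableAt.differentiableWithinAt, hf0,
    by simp [hd1 0 h0], by simpa [hd2 0 h0] using (hvE 0 h0).1, fun z hz hz0 => ?_⟩
  have hE := (hvE z hz).1
  refine ⟨by rw [hd1 z hz]; exact mul_ne_zero hz0 hE, ?_⟩
  have hhz : h z = z * dslope h 0 z - b ^ 2 / 2 := by
    have := sub_smul_dslope h 0 z
    simp only [sub_zero, smul_eq_mul] at this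
    linear_combination -this + hcoeff / 2
  rw [schwarzian, hd1 z hz, hd2 z hz, hd3 z hz, hhz]
  field_simp
  ring
end

section
/- Let U ⊆ ℂ be a nonempty open connected set, and let f, g be holomorphic on U with f'(z) ≠ 0 and g'(z) ≠ 0 for all z ∈ U. If the Schwarzian derivatives agree, S_f(z) = S_g(z) for all z ∈ U, then g is obtained from f by post-composition with a Möbius transformation: there exist a, b, c, d ∈ ℂ with ad − bc = 1 such that c·f(z) + d ≠ 0 and g(z) = (a·f(z) + b)/(c·f(z) + d) for all z ∈ U. -/
/-!
Write `P_f = f''/f'`, so that `S_f = P_f' - P_f²/2`, and put `D = P_g - P_f`. Equality of the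
Schwarzians says exactly that `D' = D (P_f + P_g) / 2`. Since `(f' g')' = f' g' (P_f + P_g)`, the
quotient `D² / (f' g')` has zero derivative, hence equals a constant `k` on the connected set `U`.

* If `k = 0`, then `D = 0`, so `g'/f'` is constant and `g` is an affine function of `f`.
* If `k ≠ 0`, then `D` vanishes nowhere, and the functions `f'/D + f/2` and `g'/D - g/2` have zero
  derivative. With `e₁`, `e₂` their values, `(e₁ - f/2) (e₂ + g/2) = f' g' / D² = 1/k`,
  which solves to a Möbius expression of `g` in `f` with determinant `4/k`.

Dividing the coefficients by a square root of the determinant normalizes it to `1`. Working with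
`D²` rather than with solutions of the linear equation `y'' + (S_f/2) y = 0` avoids choosing branches
of `√f'`, which need not exist when `U` is not simply connected.
-/

open Complex Metric

/-- A function with zero derivative on a connected open set is constant there. -/
lemma exists_const_of_hasDerivAt_zero {U : Set ℂ} (hU : IsOpen U) (hUconn : IsConnected U)
    {h : ℂ → ℂ} (hh : ∀ z ∈ U, HasDerivAt h 0 z) : ∃ k, ∀ z ∈ U, h z = k :=
  hU.exists_is_const_of_deriv_eq_zero hUconn.isPreconnected
    (fun z hz => (hh z hz).differentiableAt.differentiableWithinAt)
    (fun z hz => (hh z hz).deriv)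

/-- The first three derivatives of a holomorphic function, as `HasDerivAt` statements. -/
lemma hasDerivAt_derivs {U : Set ℂ} (hU : IsOpen U) {f : ℂ → ℂ} (hf : DifferentiableOn ℂ f U)
    {z : ℂ} (hz : z ∈ U) :
    HasDerivAt f (deriv f z) z ∧ HasDerivAt (deriv f) (iteratedDeriv 2 f z) z ∧
      HasDerivAt (iteratedDeriv 2 f) (iteratedDeriv 3 f z) z := by
  have h1 : DifferentiableOn ℂ (deriv f) U := hf.deriv hU
  have h2 : DifferentiableOn ℂ (deriv (deriv f)) U := h1.deriv hU
  have e2 : iteratedDeriv 2 f = deriv (deriv f) := by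
    rw [iteratedDeriv_succ, iteratedDeriv_one]
  have e3 : iteratedDeriv 3 f = deriv (deriv (deriv f)) := by
    rw [iteratedDeriv_succ, e2]
  rw [e2, e3]
  exact ⟨(hf.differentiableAt (hU.mem_nhds hz)).hasDerivAt,
    (h1.differentiableAt (hU.mem_nhds hz)).hasDerivAt,
    (h2.differentiableAt (hU.mem_nhds hz)).hasDerivAt⟩

/-- It is enough to find a Möbius expression with nonzero determinant. -/
lemma moebius_normalize {U : Set ℂ} {f g : ℂ → ℂ} (a b c d : ℂ) (hdet : a * d - b * c ≠ 0)
    (h : ∀ z ∈ U, c * f z + d ≠ 0 ∧ g z = (a * f z + b) / (c * f z + d)) :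
    ∃ a b c d : ℂ, a * d - b * c = 1 ∧
      ∀ z ∈ U, c * f z + d ≠ 0 ∧ g z = (a * f z + b) / (c * f z + d) := by
  obtain ⟨s, hs⟩ := IsAlgClosed.exists_pow_nat_eq (a * d - b * c) (n := 2) (by norm_num)
  have hs0 : s ≠ 0 := by
    rintro rfl
    exact hdet (by rw [← hs]; norm_num)
  refine ⟨a / s, b / s, c / s, d / s, ?_, fun z hz => ?_⟩
  · field_simp
    exact hs.symm
  · obtain ⟨h1, h2⟩ := h z hz
    have e1 : c / s * f z + d / s = (c * f z + d) / s := by ring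
    have e2 : a / s * f z + b / s = (a * f z + b) / s := by ring
    rw [e1, e2, div_div_div_cancel_right₀ hs0]
    exact ⟨div_ne_zero h1 hs0, h2⟩

/-- Two locally univalent holomorphic functions on a nonempty connected open set with the
same Schwarzian derivative differ by post-composition with a Möbius transformation. -/
theorem eq_schwarzian_iff_moebius_postcomp (U : Set ℂ) (hU : IsOpen U)
    (hUconn : IsConnected U)
    (f g : ℂ → ℂ) (hf : DifferentiableOn ℂ f U) (hg : DifferentiableOn ℂ g U)
    (hf' : ∀ z ∈ U, deriv f z ≠ 0) (hg' : ∀ z ∈ U, deriv g z ≠ 0)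
    (hS : ∀ z ∈ U, schwarzian f z = schwarzian g z) :
    ∃ a b c d : ℂ, a * d - b * c = 1 ∧
      ∀ z ∈ U, c * f z + d ≠ 0 ∧ g z = (a * f z + b) / (c * f z + d) := by
  have hF := fun z (hz : z ∈ U) => hasDerivAt_derivs hU hf hz
  have hG := fun z (hz : z ∈ U) => hasDerivAt_derivs hU hg hz
  simp only [schwarzian] at hS
  generalize deriv f = f1 at *
  generalize deriv g = g1 at *
  generalize iteratedDeriv 2 f = f2 at *
  generalize iteratedDeriv 2 g = g2 at *
  generalize iteratedDeriv 3 f = f3 at *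
  generalize iteratedDeriv 3 g = g3 at *
  obtain ⟨D, hDdef⟩ : ∃ D : ℂ → ℂ, ∀ z, D z = g2 z / g1 z - f2 z / f1 z := ⟨_, fun _ => rfl⟩
  have hD : ∀ z ∈ U, HasDerivAt D (D z * (f2 z / f1 z + g2 z / g1 z) / 2) z := by
    intro z hz
    have h := ((hG z hz).2.2.div (hG z hz).2.1 (hg' z hz)).sub
      ((hF z hz).2.2.div (hF z hz).2.1 (hf' z hz))
    have hDeq : D = g2 / g1 - f2 / f1 := funext hDdef
    have h1 := hf' z hz
    have h2 := hg' z hz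
    rw [hDdef z, hDeq]
    refine h.congr_deriv ?_
    have eg : (g3 z * g1 z - g2 z * g2 z) / g1 z ^ 2 = g3 z / g1 z - (g2 z / g1 z) ^ 2 := by
      field_simp
    have ef : (f3 z * f1 z - f2 z * f2 z) / f1 z ^ 2 = f3 z / f1 z - (f2 z / f1 z) ^ 2 := by
      field_simp
    rw [eg, ef]
    linear_combination -hS z hz
  -- The logarithmic derivatives `2 D'/D` and `(f' g')'/(f' g')` agree.
  obtain ⟨k, hk⟩ : ∃ k, ∀ z ∈ U, D z ^ 2 / (f1 z * g1 z) = k := by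
    refine exists_const_of_hasDerivAt_zero hU hUconn fun z hz => ?_
    have h1 := hf' z hz
    have h2 := hg' z hz
    refine (((hD z hz).pow 2).div ((hF z hz).2.1.mul (hG z hz).2.1)
      (mul_ne_zero h1 h2)).congr_deriv ?_
    simp only [Pi.pow_apply, Pi.mul_apply]
    field_simp
    ring
  by_cases hk0 : k = 0
  · have hD0 : ∀ z ∈ U, g2 z / g1 z - f2 z / f1 z = 0 := by
      intro z hz
      have h := hk z hz
      rw [hk0, div_eq_zero_iff, or_iff_left (mul_ne_zero (hf' z hz) (hg' z hz))] at h
      rw [← hDdef]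
      exact pow_eq_zero_iff (two_ne_zero) |>.1 h
    obtain ⟨m, hm⟩ : ∃ m, ∀ z ∈ U, g1 z / f1 z = m := by
      refine exists_const_of_hasDerivAt_zero hU hUconn fun z hz => ?_
      have h1 := hf' z hz
      have h2 := hg' z hz
      refine ((hG z hz).2.1.div (hF z hz).2.1 h1).congr_deriv ?_
      have h := hD0 z hz
      field_simp at h ⊢
      linear_combination h
    obtain ⟨b, hb⟩ : ∃ b, ∀ z ∈ U, g z - m * f z = b := by
      refine exists_const_of_hasDerivAt_zero hU hUconn fun z hz => ?_
      refine ((hG z hz).1.sub ((hF z hz).1.const_mul m)).congr_deriv ?_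
      have h1 := hf' z hz
      rw [← hm z hz]
      field_simp
      ring
    obtain ⟨z₀, hz₀⟩ := hUconn.nonempty
    have hm0 : m ≠ 0 := hm z₀ hz₀ ▸ div_ne_zero (hg' z₀ hz₀) (hf' z₀ hz₀)
    refine moebius_normalize m b 0 1 (by simpa using hm0) fun z hz => ⟨by simp, ?_⟩
    rw [← hb z hz]
    ring
  · have hDne : ∀ z ∈ U, D z ≠ 0 := by
      intro z hz h
      apply hk0
      rw [← hk z hz, h]
      simp
    obtain ⟨e₁, he₁⟩ : ∃ e, ∀ z ∈ U, f1 z / D z + f z / 2 = e := by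
      refine exists_const_of_hasDerivAt_zero hU hUconn fun z hz => ?_
      have h1 := hf' z hz
      have h2 := hg' z hz
      have h3 := hDne z hz
      refine (((hF z hz).2.1.div (hD z hz) h3).add ((hF z hz).1.div_const 2)).congr_deriv ?_
      have h := hDdef z
      field_simp at h ⊢
      linear_combination h
    obtain ⟨e₂, he₂⟩ : ∃ e, ∀ z ∈ U, g1 z / D z - g z / 2 = e := by
      refine exists_const_of_hasDerivAt_zero hU hUconn fun z hz => ?_
      have h1 := hf' z hz
      have h2 := hg' z hz
      have h3 := hDne z hz
      refine (((hG z hz).2.1.div (hD z hz) h3).sub ((hG z hz).1.div_const 2)).congr_deriv ?_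
      have h := hDdef z
      field_simp at h ⊢
      linear_combination -h
    refine moebius_normalize (2 * e₂) (4 / k - 4 * e₁ * e₂) (-1) (2 * e₁) ?_ fun z hz => ?_
    · have : 2 * e₂ * (2 * e₁) - (4 / k - 4 * e₁ * e₂) * -1 = 4 / k := by ring
      rw [this]
      exact div_ne_zero (by norm_num) hk0
    · have h1 := hf' z hz
      have h2 := hg' z hz
      have h3 := hDne z hz
      have hden : -1 * f z + 2 * e₁ = 2 * (f1 z / D z) := by
        rw [← he₁ z hz]
        ring
      have hne : -1 * f z + 2 * e₁ ≠ 0 := by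
        rw [hden]
        exact mul_ne_zero two_ne_zero (div_ne_zero h1 h3)
      refine ⟨hne, ?_⟩
      have hprod : (f1 z / D z) * (g1 z / D z) = 1 / k := by
        rw [← hk z hz]
        field_simp
      have hu : f1 z / D z = e₁ - f z / 2 := by rw [← he₁ z hz]; ring
      have hv : g1 z / D z = e₂ + g z / 2 := by rw [← he₂ z hz]; ring
      rw [hu, hv] at hprod
      rw [eq_div_iff hne]
      linear_combination 4 * hprod
end
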